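/- arXiv:1602.04758 — 2 statements merged into one kernel-verified Lean document; each statement's English description precedes it below -/
import Mathlib

section
/- Let Ω ⊆ ℝ^d be a bounded open set and f : Ω → [0,∞) continuous. Suppose u : Ω → ℝ is lower semicontinuous, convex on Ω, and is a viscosity supersolution of the Monge–Ampère equation on the set of convex functions, i.e. for every convex φ ∈ C²(Ω) such that u − φ attains a local minimum at a point x ∈ Ω one has M(D²φ(x), f(x)) ≥ 0. Then u is a viscosity supersolution of the Bellman equation: for every φ ∈ C²(Ω) (not necessarily convex) such that u − φ attains a local minimum at x ∈ Ω, one has H(D²φ(x), f(x)) ≥ 0. -/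
open Matrix Set

/-- The set 𝐒₁ of positive semidefinite symmetric d×d real matrices with unit trace. -/
def S1set (d : ℕ) : Set (Matrix (Fin d) (Fin d) ℝ) :=
  {B | B.PosSemidef ∧ B.trace = 1}

/-- The value −B:A + f·(det B)^(1/d) appearing under the supremum of the Bellman operator. -/
noncomputable def bval (d : ℕ) (A B : Matrix (Fin d) (Fin d) ℝ) (f : ℝ) : ℝ :=
  -((B * A).trace) + f * B.det ^ ((1 : ℝ) / d)

/-- The Bellman operator H(A,f) = sup_{B ∈ 𝐒₁} (−B:A + f·(det B)^(1/d)). -/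
noncomputable def bellman (d : ℕ) (A : Matrix (Fin d) (Fin d) ℝ) (f : ℝ) : ℝ :=
  sSup ((fun B => bval d A B f) '' S1set d)

/-- The Monge–Ampère operator M(A,f) = (f/d)^d − det A. -/
noncomputable def MAop (d : ℕ) (A : Matrix (Fin d) (Fin d) ℝ) (f : ℝ) : ℝ :=
  (f / d) ^ d - A.det

/-- The Hessian matrix D²φ(x) of φ : ℝ^d → ℝ at x. -/
noncomputable def hessianM (d : ℕ) (φ : (Fin d → ℝ) → ℝ) (x : Fin d → ℝ) :
    Matrix (Fin d) (Fin d) ℝ :=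
  fun i j => iteratedFDeriv ℝ 2 φ x ![Pi.single i 1, Pi.single j 1]

open Filter Topology

lemma bellman_nonneg {d : ℕ} {A B : Matrix (Fin d) (Fin d) ℝ} {f : ℝ}
    (hB : B ∈ S1set d) (h : 0 ≤ bval d A B f) : 0 ≤ bellman d A f := by
  unfold bellman
  by_cases hb : BddAbove ((fun B => bval d A B f) '' S1set d)
  · exact h.trans (le_csSup hb ⟨B, hB, rfl⟩)
  · rw [Real.sSup_of_not_bddAbove hb]

lemma bellman_of_nonpos {d : ℕ} {A : Matrix (Fin d) (Fin d) ℝ} {f : ℝ} (hf : 0 ≤ f)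
    {v : Fin d → ℝ} (hv : v ≠ 0) (h : v ⬝ᵥ A *ᵥ v ≤ 0) : 0 ≤ bellman d A f := by
  have hp : 0 < v ⬝ᵥ v := by
    have := dotProduct_star_self_pos_iff.2 hv
    simpa using this
  have hps : ((v ⬝ᵥ v)⁻¹ • vecMulVec v v).PosSemidef := by
    have := posSemidef_vecMulVec_self_star v
    simp only [star_trivial] at this
    exact this.smul (inv_nonneg.2 hp.le)
  refine bellman_nonneg (B := (v ⬝ᵥ v)⁻¹ • vecMulVec v v) ⟨hps, ?_⟩ ?_
  · rw [trace_smul, trace_vecMulVec, smul_eq_mul, inv_mul_cancel₀ hp.ne']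
  · unfold bval
    have h1 : (((v ⬝ᵥ v)⁻¹ • vecMulVec v v) * A).trace = (v ⬝ᵥ v)⁻¹ * (v ⬝ᵥ A *ᵥ v) := by
      rw [smul_mul, trace_smul, vecMulVec_mul, trace_vecMulVec, smul_eq_mul,
        dotProduct_mulVec, dotProduct_comm (v ᵥ* A)]
    rw [h1]
    have h2 := mul_nonpos_of_nonneg_of_nonpos (inv_nonneg.2 hp.le) h
    have h3 := mul_nonneg hf (Real.rpow_nonneg hps.det_nonneg ((1 : ℝ) / d))
    linarith

lemma bellman_of_posDef {d : ℕ} (hd : 2 ≤ d) {A : Matrix (Fin d) (Fin d) ℝ} {f : ℝ} (hf : 0 ≤ f)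
    (hA : A.PosDef) (h : A.det ≤ (f / d) ^ d) : 0 ≤ bellman d A f := by
  have hdR : (0 : ℝ) < d := by positivity
  have hd0 : d ≠ 0 := by omega
  have : Nonempty (Fin d) := ⟨⟨0, by omega⟩⟩
  have ht : 0 < (A⁻¹).trace := hA.inv.trace_pos
  set t := (A⁻¹).trace with htdef
  have hD : 0 < A.det := hA.det_pos
  have hps : (t⁻¹ • A⁻¹).PosSemidef := hA.inv.posSemidef.smul (inv_nonneg.2 ht.le)
  refine bellman_nonneg (B := t⁻¹ • A⁻¹) ⟨hps, ?_⟩ ?_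
  · rw [trace_smul, smul_eq_mul, ← htdef, inv_mul_cancel₀ ht.ne']
  · unfold bval
    have h1 : ((t⁻¹ • A⁻¹) * A).trace = t⁻¹ * d := by
      rw [smul_mul, trace_smul, nonsing_inv_mul _ hD.ne'.isUnit, trace_one]
      simp
    have h2 : (t⁻¹ • A⁻¹).det ^ ((1 : ℝ) / d) = t⁻¹ * (A.det ^ ((1 : ℝ) / d))⁻¹ := by
      rw [det_smul, det_nonsing_inv, Ring.inverse_eq_inv', Fintype.card_fin,
        Real.mul_rpow (by positivity) (by positivity), one_div, Real.pow_rpow_inv_natCast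
        (by positivity) hd0, Real.inv_rpow hD.le]
    rw [h1, h2]
    have h3 : A.det ^ ((1 : ℝ) / d) ≤ f / d := by
      have := Real.rpow_le_rpow hD.le h (by positivity : (0 : ℝ) ≤ 1 / d)
      rwa [one_div, Real.pow_rpow_inv_natCast (by positivity) hd0, ← one_div] at this
    have h4 : 0 < A.det ^ ((1 : ℝ) / d) := Real.rpow_pos_of_pos hD _
    rw [le_div_iff₀ hdR] at h3
    have h5 : (d : ℝ) ≤ f * (A.det ^ ((1 : ℝ) / d))⁻¹ := by
      rw [← div_eq_mul_inv, le_div_iff₀ h4]; linarith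
    have h6 := mul_le_mul_of_nonneg_left h5 (inv_nonneg.2 ht.le)
    nlinarith

section quad
variable {E : Type*} [NormedAddCommGroup E] [NormedSpace ℝ E]

lemma quad_hasFDerivAt (D : E →L[ℝ] E →L[ℝ] ℝ) (hD : ∀ v w, D v w = D w v) (L : E →L[ℝ] ℝ)
    (x y : E) : HasFDerivAt (fun y => L (y - x) + 1 / 2 * D (y - x) (y - x)) (L + D (y - x)) y := by
  have h0 : HasFDerivAt (fun y => y - x) (ContinuousLinearMap.id ℝ E) y :=
    (hasFDerivAt_id y).sub_const x
  have h1 := (L.hasFDerivAt (x := y - x)).comp y h0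
  have h2 := ((D.hasFDerivAt (x := y - x)).comp y h0).clm_apply h0
  refine (h1.add (h2.const_mul (1 / 2 : ℝ))).congr_fderiv ?_
  ext v
  simp [hD v y, hD v x]
  ring

lemma quad_sndFDeriv (D : E →L[ℝ] E →L[ℝ] ℝ) (hD : ∀ v w, D v w = D w v) (L : E →L[ℝ] ℝ)
    (x : E) : fderiv ℝ (fderiv ℝ (fun y => L (y - x) + 1 / 2 * D (y - x) (y - x))) x = D := by
  have : fderiv ℝ (fun y => L (y - x) + 1 / 2 * D (y - x) (y - x)) = fun y => L + D (y - x) := by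
    ext1 y
    exact (quad_hasFDerivAt D hD L x y).fderiv
  rw [this]
  have h0 : HasFDerivAt (fun y => y - x) (ContinuousLinearMap.id ℝ E) x :=
    (hasFDerivAt_id x).sub_const x
  have h2 := (HasFDerivAt.comp (f := fun y => y - x) x (D.hasFDerivAt (x := x - x)) h0).const_add L
  exact h2.fderiv

lemma quad_convex (D : E →L[ℝ] E →L[ℝ] ℝ) (hD : ∀ v w, D v w = D w v) (L : E →L[ℝ] ℝ)
    (x : E) (hp : ∀ v, 0 ≤ D v v) {s : Set E} (hs : Convex ℝ s) :
    ConvexOn ℝ s (fun y => L (y - x) + 1 / 2 * D (y - x) (y - x)) := by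
  refine ⟨hs, fun p _ q _ a b ha hb hab => ?_⟩
  have hx : a • p + b • q - x = a • (p - x) + b • (q - x) := by
    have : x = a • x + b • x := by rw [← add_smul, hab, one_smul]
    nth_rewrite 1 [this]
    module
  simp only [hx]
  generalize p - x = p
  generalize q - x = q
  have h1 := hp (p - q)
  simp only [map_add, map_smul, map_sub, _root_.sub_apply, _root_.add_apply, _root_.smul_apply, smul_eq_mul, hD q p] at h1 ⊢
  obtain rfl : b = 1 - a := by linarith
  nlinarith [mul_nonneg (mul_nonneg ha hb) h1]

lemma quad_contDiff (D : E →L[ℝ] E →L[ℝ] ℝ) (L : E →L[ℝ] ℝ) (x : E) :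
    ContDiff ℝ 2 (fun y => L (y - x) + 1 / 2 * D (y - x) (y - x)) := by
  have h0 : ContDiff ℝ 2 (fun y : E => y - x) := contDiff_id.sub contDiff_const
  exact (L.contDiff.comp h0).add (contDiff_const.mul ((D.contDiff.comp h0).clm_apply h0))

lemma coercive [FiniteDimensional ℝ E] (D : E →L[ℝ] E →L[ℝ] ℝ) (hp : ∀ v, v ≠ 0 → 0 < D v v) :
    ∃ c > 0, ∀ v, c * ‖v‖ ^ 2 ≤ D v v := by
  have := FiniteDimensional.proper_real E
  rcases subsingleton_or_nontrivial E with hE | hE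
  · refine ⟨1, one_pos, fun v => ?_⟩
    rw [Subsingleton.elim v 0]; simp
  have hc : IsCompact (Metric.sphere (0 : E) 1) := isCompact_sphere _ _
  have hne : (Metric.sphere (0 : E) 1).Nonempty := NormedSpace.sphere_nonempty.2 zero_le_one
  have hcont : Continuous fun v => D v v := D.continuous.clm_apply continuous_id
  obtain ⟨w, hw, hmin⟩ := hc.exists_isMinOn hne hcont.continuousOn
  have hw1 : ‖w‖ = 1 := by simpa using hw
  refine ⟨D w w, hp w (by rintro rfl; simp at hw1), fun v => ?_⟩
  by_cases hv : v = 0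
  · simp [hv]
  have hn : 0 < ‖v‖ := norm_pos_iff.2 hv
  have hm : D w w ≤ D (‖v‖⁻¹ • v) (‖v‖⁻¹ • v) := hmin (by simp [norm_smul, hn.ne'])
  simp only [map_smul, _root_.smul_apply, smul_eq_mul] at hm
  calc D w w * ‖v‖ ^ 2 ≤ (‖v‖⁻¹ * (‖v‖⁻¹ * D v v)) * ‖v‖ ^ 2 := by gcongr
    _ = D v v := by field_simp

lemma taylor_min [FiniteDimensional ℝ E] {φ : E → ℝ} {x : E} (hφ : ContDiffAt ℝ 2 φ x)
    (hp : ∀ v, v ≠ 0 → 0 < fderiv ℝ (fderiv ℝ φ) x v v) {ε : ℝ} (hε : 0 < ε) :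
    ∀ᶠ y in 𝓝 x, φ x + (fderiv ℝ φ x (y - x) +
      1 / 2 * ((1 - ε) • fderiv ℝ (fderiv ℝ φ) x) (y - x) (y - x)) ≤ φ y := by
  set D := fderiv ℝ (fderiv ℝ φ) x with hDdef
  have hsym : ∀ v w, D v w = D w v := hφ.isSymmSndFDerivAt (by simp)
  obtain ⟨c, hc, hcD⟩ := coercive D hp
  have hdd : DifferentiableAt ℝ (fderiv ℝ φ) x :=
    (hφ.fderiv_right (m := 1) (by norm_num)).differentiableAt (by norm_num)
  have hlo := hdd.hasFDerivAt.isLittleO.def (show 0 < ε * c / 2 by positivity)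
  have hev : ∀ᶠ y in 𝓝 x, DifferentiableAt ℝ φ y := by
    filter_upwards [hφ.eventually (by simp)] with y hy
    exact hy.differentiableAt (by norm_num)
  obtain ⟨r, hr, hball⟩ := Metric.eventually_nhds_iff_ball.1 (hlo.and hev)
  filter_upwards [Metric.ball_mem_nhds x hr] with y hy
  have hsub : Metric.closedBall x ‖y - x‖ ⊆ Metric.ball x r := by
    apply Metric.closedBall_subset_ball
    simpa [dist_eq_norm] using hy
  have key := Convex.norm_image_sub_le_of_norm_hasFDerivWithin_le (𝕜 := ℝ)
    (f := fun z => φ z - (fderiv ℝ φ x (z - x) + 1 / 2 * D (z - x) (z - x)))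
    (f' := fun z => fderiv ℝ φ z - (fderiv ℝ φ x + D (z - x)))
    (s := Metric.closedBall x ‖y - x‖) (C := ε * c / 2 * ‖y - x‖) (x := x) (y := y)
    (fun z hz => ((hball z (hsub hz)).2.hasFDerivAt.sub
      (quad_hasFDerivAt D hsym _ x z)).hasFDerivWithinAt)
    (fun z hz => by
      have h1 := (hball z (hsub hz)).1
      rw [sub_sub] at h1
      refine h1.trans ?_
      have : ‖z - x‖ ≤ ‖y - x‖ := by simpa [dist_eq_norm] using hz
      gcongr)
    (convex_closedBall _ _) (by simp) (by simp [dist_eq_norm])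
  simp only [sub_self, map_zero, mul_zero, add_zero, sub_zero] at key
  have h2 := (abs_le.1 (Real.norm_eq_abs _ ▸ key)).1
  have h3 := hcD (y - x)
  simp only [_root_.smul_apply, smul_eq_mul]
  nlinarith [mul_le_mul_of_nonneg_left h3 hε.le]

end quad

lemma hess_quad {d : ℕ} (D : (Fin d → ℝ) →L[ℝ] (Fin d → ℝ) →L[ℝ] ℝ) (v : Fin d → ℝ) :
    v ⬝ᵥ (Matrix.of fun i j => D (Pi.single i 1) (Pi.single j 1)) *ᵥ v = D v v := by
  have hv : v = ∑ i, v i • (Pi.single i 1 : Fin d → ℝ) := pi_eq_sum_univ' v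
  conv_rhs => rw [hv]
  simp only [map_sum, map_smul, _root_.sum_apply, _root_.smul_apply, smul_eq_mul,
    dotProduct, mulVec, Matrix.of_apply]
  simp only [Finset.mul_sum]
  rw [Finset.sum_comm]
  refine Finset.sum_congr rfl fun i _ => Finset.sum_congr rfl fun j _ => by ring

lemma hess_eq {d : ℕ} (φ : (Fin d → ℝ) → ℝ) (x : Fin d → ℝ) :
    hessianM d φ x = Matrix.of fun i j =>
      fderiv ℝ (fderiv ℝ φ) x (Pi.single i 1) (Pi.single j 1) := by
  ext i j
  simp [hessianM, iteratedFDeriv_two_apply]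

/-- A convex viscosity supersolution of the Monge–Ampère equation on the set of convex
functions is a viscosity supersolution of the Bellman equation. -/
theorem stmt_3 (d : ℕ) (hd : 2 ≤ d) (Ω : Set (Fin d → ℝ)) (hΩo : IsOpen Ω)
    (hΩb : Bornology.IsBounded Ω)
    (f : (Fin d → ℝ) → ℝ) (hfc : ContinuousOn f Ω) (hf0 : ∀ x ∈ Ω, 0 ≤ f x)
    (u : (Fin d → ℝ) → ℝ) (hlsc : LowerSemicontinuousOn u Ω) (hucvx : ConvexOn ℝ Ω u)
    (hMAsup : ∀ φ : (Fin d → ℝ) → ℝ, ContDiffOn ℝ 2 φ Ω → ConvexOn ℝ Ω φ →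
      ∀ x ∈ Ω, IsLocalMinOn (fun y => u y - φ y) Ω x →
        0 ≤ MAop d (hessianM d φ x) (f x)) :
    ∀ φ : (Fin d → ℝ) → ℝ, ContDiffOn ℝ 2 φ Ω →
      ∀ x ∈ Ω, IsLocalMinOn (fun y => u y - φ y) Ω x →
        0 ≤ bellman d (hessianM d φ x) (f x) := by
  intro φ hφ x hx hmin
  have hφx : ContDiffAt ℝ 2 φ x := hφ.contDiffAt (hΩo.mem_nhds hx)
  set D := fderiv ℝ (fderiv ℝ φ) x with hDdef
  have hsym : ∀ v w, D v w = D w v := hφx.isSymmSndFDerivAt (by simp)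
  have hA := hess_eq φ x
  rw [← hDdef] at hA
  by_cases hp : ∀ v, v ≠ 0 → 0 < D v v
  swap
  · push Not at hp
    obtain ⟨v, hv, hle⟩ := hp
    refine bellman_of_nonpos (hf0 x hx) hv ?_
    rw [hA, hess_quad]
    exact hle
  have hpd : (hessianM d φ x).PosDef := by
    refine .of_dotProduct_mulVec_pos ?_ ?_
    · rw [hA]
      ext i j
      simp [hsym (Pi.single i 1)]
    · intro v hv
      rw [hA, star_trivial, hess_quad]
      exact hp v hv
  refine bellman_of_posDef hd (hf0 x hx) hpd ?_
  have hstep : ∀ ε ∈ Ioo (0 : ℝ) 1, (1 - ε) ^ d * (hessianM d φ x).det ≤ (f x / d) ^ d := by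
    rintro ε ⟨hε, hε1⟩
    have hs' : ∀ v w, ((1 - ε) • D) v w = ((1 - ε) • D) w v := by
      intro v w
      simp [hsym v w]
    have hpos : ∀ v, 0 ≤ ((1 - ε) • D) v v := by
      intro v
      have h1 : 0 ≤ 1 - ε := by linarith
      have h2 : 0 ≤ D v v := by
        by_cases hv : v = 0
        · simp [hv]
        · exact (hp v hv).le
      simpa using mul_nonneg h1 h2
    have := hMAsup _ (quad_contDiff ((1 - ε) • D) (fderiv ℝ φ x) x).contDiffOn
      (quad_convex ((1 - ε) • D) hs' (fderiv ℝ φ x) x hpos hucvx.1) x hx ?_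
    · rw [MAop, hess_eq, quad_sndFDeriv _ hs'] at this
      have h3 : (Matrix.of fun i j => ((1 - ε) • D) (Pi.single i 1) (Pi.single j 1))
          = (1 - ε) • hessianM d φ x := by
        rw [hA]; ext i j; simp
      rw [h3, det_smul, Fintype.card_fin] at this
      linarith
    · have ht := (taylor_min hφx hp hε).filter_mono (nhdsWithin_le_nhds (s := Ω))
      filter_upwards [hmin, ht] with y h1 h2
      simp only [sub_self, map_zero, mul_zero, add_zero, sub_zero]
      rw [← hDdef] at h2
      linarith
  have hlim : Tendsto (fun ε : ℝ => (1 - ε) ^ d * (hessianM d φ x).det) (𝓝[>] 0)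
      (𝓝 ((hessianM d φ x).det)) := by
    have hc : Continuous (fun ε : ℝ => (1 - ε) ^ d * (hessianM d φ x).det) := by fun_prop
    have := (hc.tendsto 0).mono_left (nhdsWithin_le_nhds (s := Ioi 0))
    simpa using this
  refine le_of_tendsto hlim ?_
  filter_upwards [Ioo_mem_nhdsGT (zero_lt_one' ℝ)] with ε hε using hstep ε hε
end

section
/- Let Ω ⊆ ℝ^d be a bounded open convex set and f : Ω → [0,∞) continuous. If u : Ω → ℝ is upper semicontinuous and is a viscosity subsolution of the Bellman equation H(D²u, f) = 0 (i.e. for every φ ∈ C²(Ω) such that u − φ attains a local maximum at x ∈ Ω one has H(D²φ(x), f(x)) ≤ 0), then u is convex on Ω. -/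
open Matrix Set

lemma aux_entry {d : ℕ} {B : Matrix (Fin d) (Fin d) ℝ} (hB : B ∈ S1set d) (i j : Fin d) :
    |B i j| ≤ 1 := by
  obtain ⟨hp, ht⟩ := hB
  have hdiag : ∀ k, 0 ≤ B k k := fun k => hp.diag_nonneg
  have hle : ∀ k, B k k ≤ 1 := by
    intro k
    rw [← ht]
    exact Finset.single_le_sum (f := fun k => B k k) (fun k _ => hdiag k) (Finset.mem_univ k)
  have hs : B j i = B i j := by
    have := hp.1.apply i j
    simpa using this
  have h1 := hp.dotProduct_mulVec_nonneg (Pi.single i 1 + Pi.single j 1)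
  have h2 := hp.dotProduct_mulVec_nonneg (Pi.single i 1 - Pi.single j 1)
  simp [mulVec_add, mulVec_sub, add_dotProduct, sub_dotProduct] at h1 h2
  have := hle i
  have := hle j
  rw [abs_le]
  constructor <;> linarith

lemma aux_bdd (d : ℕ) (hd : 2 ≤ d) (A : Matrix (Fin d) (Fin d) ℝ) (f : ℝ) :
    BddAbove ((fun B => bval d A B f) '' S1set d) := by
  have hc : Continuous (fun B => bval d A B f) := by
    unfold bval
    have h2 : Continuous fun B : Matrix (Fin d) (Fin d) ℝ => B.det ^ ((1 : ℝ) / d) :=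
      (Continuous.matrix_det continuous_id).rpow_const (fun _ => Or.inr (by positivity))
    have h1 : Continuous fun B : Matrix (Fin d) (Fin d) ℝ => (B * A).trace :=
      (continuous_id.matrix_mul continuous_const).matrix_trace
    exact h1.neg.add (continuous_const.mul h2)
  have hK : IsCompact (Set.univ.pi (fun _ : Fin d => Set.univ.pi (fun _ : Fin d => Icc (-1:ℝ) 1))) :=
    isCompact_univ_pi fun _ => isCompact_univ_pi fun _ => isCompact_Icc
  have := hK.bddAbove_image (f := fun B : Matrix (Fin d) (Fin d) ℝ => bval d A B f) hc.continuousOn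
  refine this.mono (image_mono ?_)
  intro B hB i _ j _
  exact abs_le.1 (aux_entry hB i j)

lemma aux_nonneg (d : ℕ) (hd : 2 ≤ d) (A : Matrix (Fin d) (Fin d) ℝ) (f : ℝ) (hf : 0 ≤ f)
    (h : bellman d A f ≤ 0) (v : Fin d → ℝ) (hv : v ≠ 0) : 0 ≤ v ⬝ᵥ (A *ᵥ v) := by
  have hvv : 0 < v ⬝ᵥ v := by
    have := (dotProduct_star_self_pos_iff (v := v)).2 hv
    simpa using this
  have hB : (v ⬝ᵥ v)⁻¹ • vecMulVec v v ∈ S1set d := by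
    refine ⟨?_, ?_⟩
    · have := (posSemidef_vecMulVec_self_star v).smul (inv_nonneg.2 hvv.le)
      simpa using this
    · simp [trace_smul, trace_vecMulVec, hvv.ne']
  have h1 := (le_csSup (aux_bdd d hd A f) (mem_image_of_mem _ hB)).trans h
  have h2 : 0 ≤ f * ((v ⬝ᵥ v)⁻¹ • vecMulVec v v).det ^ ((1 : ℝ) / d) :=
    mul_nonneg hf (Real.rpow_nonneg hB.1.det_nonneg _)
  simp only [bval] at h1
  have h3 : 0 ≤ (((v ⬝ᵥ v)⁻¹ • vecMulVec v v) * A).trace := by linarith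
  rw [smul_mul_assoc, trace_smul, vecMulVec_mul, trace_vecMulVec, smul_eq_mul] at h3
  have h4 := (mul_nonneg_iff_of_pos_left (inv_pos.2 hvv)).1 h3
  rwa [dotProduct_comm, ← dotProduct_mulVec] at h4

lemma aux_hess (d : ℕ) (φ : (Fin d → ℝ) → ℝ) (hφ : ContDiff ℝ 2 φ) (z v : Fin d → ℝ)
    (a b : ℝ) (S : (Fin d → ℝ) →L[ℝ] ℝ) (hS : S v = 1)
    (h : ∀ w, HasDerivAt (fun t : ℝ => φ (w + t • v)) (a + b * S w) 0) :
    v ⬝ᵥ (hessianM d φ z *ᵥ v) = b := by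
  have hd1 : Differentiable ℝ φ := hφ.differentiable (by norm_num)
  have hd2 : Differentiable ℝ (fderiv ℝ φ) :=
    (hφ.fderiv_right (m := 1) (by norm_num)).differentiable (by norm_num)
  have h1 : ∀ w, fderiv ℝ φ w v = a + b * S w := by
    intro w
    rw [← (hd1 w).lineDeriv_eq_fderiv]
    exact (h w).deriv
  have h2 : fderiv ℝ (fderiv ℝ φ) z v v = b := by
    have e1 : HasFDerivAt (fun w => fderiv ℝ φ w v) (b • S) z := by
      simp_rw [h1]
      exact (S.hasFDerivAt.const_mul b).const_add a
    have e2 := (hd2 z).hasFDerivAt.clm_apply (hasFDerivAt_const v z)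
    have := congrArg (fun L => L v) (e2.unique e1)
    simpa [hS] using this
  have hv : v = ∑ i, v i • (Pi.single i 1 : Fin d → ℝ) := by
    ext k; simp [Finset.sum_apply, Pi.single_apply]
  have h3 : fderiv ℝ (fderiv ℝ φ) z v v = ∑ i, ∑ j, v i * (v j *
      fderiv ℝ (fderiv ℝ φ) z (Pi.single i 1) (Pi.single j 1)) := by
    conv_lhs => rw [hv]
    simp only [map_sum, map_smul, _root_.sum_apply, _root_.smul_apply, smul_eq_mul, Finset.mul_sum]
    rw [Finset.sum_comm]
    refine Finset.sum_congr rfl fun i _ => Finset.sum_congr rfl fun j _ => ?_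
    ring
  rw [← h2, h3]
  simp only [dotProduct, mulVec, hessianM, iteratedFDeriv_two_apply, Finset.mul_sum]
  refine Finset.sum_congr rfl fun i _ => Finset.sum_congr rfl fun j _ => ?_
  simp only [Matrix.cons_val_zero, Matrix.cons_val_one]
  ring

/-- An upper semicontinuous viscosity subsolution of the Bellman equation on a bounded
open convex set is convex. -/
theorem stmt_9 (d : ℕ) (hd : 2 ≤ d) (Ω : Set (Fin d → ℝ)) (hΩo : IsOpen Ω)
    (hΩb : Bornology.IsBounded Ω) (hΩc : Convex ℝ Ω)
    (f : (Fin d → ℝ) → ℝ) (hfc : ContinuousOn f Ω) (hf0 : ∀ x ∈ Ω, 0 ≤ f x)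
    (u : (Fin d → ℝ) → ℝ) (husc : UpperSemicontinuousOn u Ω)
    (hsub : ∀ φ : (Fin d → ℝ) → ℝ, ContDiffOn ℝ 2 φ Ω →
      ∀ x ∈ Ω, IsLocalMaxOn (fun y => u y - φ y) Ω x →
        bellman d (hessianM d φ x) (f x) ≤ 0) :
    ConvexOn ℝ Ω u := by
  refine ⟨hΩc, ?_⟩
  intro x hx y hy α t hα ht hαt
  by_contra! hlt
  have hα' : α = 1 - t := by linarith
  subst hα'
  simp only [smul_eq_mul] at hlt
  have hxy : y - x ≠ 0 := by
    intro h
    have : y = x := sub_eq_zero.1 h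
    subst this
    rw [← add_smul] at hlt
    simp at hlt
    linarith
  obtain ⟨v, hv⟩ : ∃ v, v = y - x := ⟨_, rfl⟩
  rw [← hv] at hxy
  have hyv : y = x + v := by rw [hv]; abel
  have hz : (1 - t) • x + t • y = x + t • v := by rw [hv]; module
  rw [hz] at hlt
  obtain ⟨δ, hδ⟩ : ∃ δ, δ = u (x + t • v) - (u x + (u y - u x) * t) := ⟨_, rfl⟩
  have hδ0 : 0 < δ := by rw [hδ]; linarith
  have hvv : 0 < v ⬝ᵥ v := by
    have := (dotProduct_star_self_pos_iff (v := v)).2 hxy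
    simpa using this
  obtain ⟨S, hS⟩ : ∃ S : (Fin d → ℝ) →L[ℝ] ℝ, S v = 1 := by
    refine ⟨LinearMap.toContinuousLinearMap
      ((v ⬝ᵥ v)⁻¹ • (dotProductBilin ℝ ℝ v)), ?_⟩
    simp [dotProductBilin, hvv.ne']
  -- geometric data
  obtain ⟨s, hs⟩ : ∃ s : (Fin d → ℝ) → ℝ, s = fun w => S w - S x := ⟨_, rfl⟩
  obtain ⟨p, hp⟩ : ∃ p : (Fin d → ℝ) → (Fin d → ℝ), p = fun w => w - x - s w • v := ⟨_, rfl⟩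
  have hsc : ContDiff ℝ 2 s := by rw [hs]; fun_prop
  have hpc : ContDiff ℝ 2 p := by rw [hp]; fun_prop
  have hsl : ∀ w (τ : ℝ), s (w + τ • v) = s w + τ := by
    intro w τ; simp [hs, hS]; ring
  have hpl : ∀ w (τ : ℝ), p (w + τ • v) = p w := by
    intro w τ; simp only [hp, hsl]; module
  have hsx : s x = 0 := by simp [hs]
  have hpx : p x = 0 := by simp [hp, hsx]
  have hwp : ∀ w, w = x + s w • v + p w := by intro w; simp only [hp]; module
  have hseg : IsCompact (segment ℝ x y) := by
    rw [segment_eq_image']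
    exact isCompact_Icc.image (by fun_prop)
  obtain ⟨r₁, hr₁, hsub₁⟩ := hseg.exists_cthickening_subset_open hΩo (hΩc.segment_subset hx hy)
  obtain ⟨r₂, hr₂, hb₂⟩ := Metric.eventually_nhds_iff.1
    (eventually_nhdsWithin_iff.1 (husc x hx (u x + δ / 4) (by linarith)))
  obtain ⟨r₃, hr₃, hb₃⟩ := Metric.eventually_nhds_iff.1
    (eventually_nhdsWithin_iff.1 (husc y hy (u y + δ / 4) (by linarith)))
  obtain ⟨r, hr, hrr₁, hrr₂, hrr₃⟩ : ∃ r : ℝ, 0 < r ∧ r ≤ r₁ ∧ r < r₂ ∧ r < r₃ := by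
    refine ⟨min r₁ (min (r₂/2) (r₃/2)), by positivity, min_le_left _ _, ?_, ?_⟩
    · exact ((min_le_right _ _).trans (min_le_left _ _)).trans_lt (by linarith)
    · exact ((min_le_right _ _).trans (min_le_right _ _)).trans_lt (by linarith)
  obtain ⟨K, hK⟩ : ∃ K : Set (Fin d → ℝ), K = {w | 0 ≤ s w ∧ s w ≤ 1 ∧ ‖p w‖ ≤ r} := ⟨_, rfl⟩
  have hKΩ : K ⊆ Ω := by
    intro w hw
    rw [hK] at hw
    obtain ⟨h0, h1, h2⟩ := hw
    apply hsub₁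
    refine Metric.mem_cthickening_of_dist_le w (x + s w • v) _ _ ?_ ?_
    · rw [segment_eq_image']
      exact ⟨s w, ⟨h0, h1⟩, by simp [hv]⟩
    · rw [dist_eq_norm]
      have : w - (x + s w • v) = p w := by simp only [hp]; abel
      rw [this]; linarith
  have hKcl : IsClosed K := by
    rw [hK]
    exact (isClosed_le continuous_const hsc.continuous).inter
      ((isClosed_le hsc.continuous continuous_const).inter
        (isClosed_le hpc.continuous.norm continuous_const))
  have hKc : IsCompact K := Metric.isCompact_of_isClosed_isBounded hKcl (hΩb.subset hKΩ)
  have hzK : x + t • v ∈ K := by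
    rw [hK]
    refine ⟨?_, ?_, ?_⟩
    · rw [hsl, hsx]; linarith
    · rw [hsl, hsx]; linarith
    · rw [hpl, hpx]; simpa using hr.le
  -- the test functions
  have hmax : ∀ ψ : (Fin d → ℝ) → ℝ, ContDiff ℝ 2 ψ →
      ∃ w ∈ K, IsMaxOn (fun y => u y - ψ y) K w := by
    intro ψ hψ
    have h1 : UpperSemicontinuousOn (fun y => u y + (- ψ y)) K :=
      (husc.mono hKΩ).add (hψ.continuous.neg.upperSemicontinuous.upperSemicontinuousOn K)
    have := h1.exists_isMaxOn ⟨_, hzK⟩ hKc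
    simpa [sub_eq_add_neg] using this
  obtain ⟨w₀, -, hM⟩ := hmax (fun w => u x + (u y - u x) * s w - δ / 4 * s w ^ 2)
    (by fun_prop)
  obtain ⟨M, hMdef⟩ : ∃ M, M = (fun y' => u y' - (u x + (u y - u x) * s y' - δ / 4 * s y' ^ 2)) w₀ :=
    ⟨_, rfl⟩
  have hM' : ∀ w ∈ K, u w - (u x + (u y - u x) * s w - δ / 4 * s w ^ 2) ≤ M := by
    intro w hw; rw [hMdef]; exact hM hw
  obtain ⟨N, hN⟩ : ∃ N, N = |M| / r ^ 2 := ⟨_, rfl⟩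
  have hN0 : 0 ≤ N := by rw [hN]; positivity
  obtain ⟨φ, hφ⟩ : ∃ φ : (Fin d → ℝ) → ℝ, φ = fun w => u x + (u y - u x) * s w
    - δ / 4 * s w ^ 2 + N * ∑ i, p w i ^ 2 := ⟨_, rfl⟩
  have hφc : ContDiff ℝ 2 φ := by rw [hφ]; fun_prop
  obtain ⟨w, hwK, hw⟩ := hmax φ hφc
  have hwδ : δ ≤ u w - φ w := by
    refine le_trans ?_ (hw hzK)
    simp only [hφ, hsl, hpl, hsx, hpx]
    simp
    nlinarith [mul_nonneg hδ0.le (sq_nonneg t)]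
  have hq : ∀ w, 0 ≤ N * ∑ i, p w i ^ 2 := fun w =>
    mul_nonneg hN0 (Finset.sum_nonneg fun i _ => sq_nonneg _)
  have hwΩ := hKΩ hwK
  have hwK' := hwK
  rw [hK] at hwK'
  obtain ⟨h0, h1, h2⟩ := hwK'
  have hqw := hq w
  have h0' : 0 < s w := by
    refine lt_of_le_of_ne h0 fun he => ?_
    have h3 : u w < u x + δ / 4 := by
      refine hb₂ ?_ hwΩ
      have := hwp w
      rw [← he] at this
      rw [dist_eq_norm]
      have h4 : w - x = p w := by simp [hp, ← he]
      rw [h4]; linarith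
    simp only [hφ, ← he] at hwδ
    linarith
  have h1' : s w < 1 := by
    refine lt_of_le_of_ne h1 fun he => ?_
    have h3 : u w < u y + δ / 4 := by
      refine hb₃ ?_ hwΩ
      rw [dist_eq_norm]
      have h4 : w - y = p w := by simp only [hp, he, hyv]; module
      rw [h4]; linarith
    simp only [hφ, he] at hwδ
    linarith
  have h2' : ‖p w‖ < r := by
    refine lt_of_le_of_ne h2 fun he => ?_
    have h3 : r ^ 2 ≤ ∑ i, p w i ^ 2 := by
      by_contra! hcon
      have : ‖p w‖ < r := by
        rw [pi_norm_lt_iff hr]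
        intro i
        have := (Finset.single_le_sum (f := fun i => p w i ^ 2) (fun i _ => sq_nonneg _)
          (Finset.mem_univ i)).trans_lt hcon
        rw [Real.norm_eq_abs]
        exact abs_lt_of_sq_lt_sq this hr.le
      linarith
    have h4 := hM' w hwK
    have h5 : |M| ≤ N * ∑ i, p w i ^ 2 := by
      calc |M| = N * r ^ 2 := by rw [hN]; field_simp
        _ ≤ _ := by gcongr
    have := le_abs_self M
    simp only [hφ] at hwδ
    linarith
  have hnhds : K ∈ nhds w := by
    have ho : IsOpen {w | 0 < s w ∧ s w < 1 ∧ ‖p w‖ < r} :=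
      (isOpen_lt continuous_const hsc.continuous).inter
      ((isOpen_lt hsc.continuous continuous_const).inter
        (isOpen_lt hpc.continuous.norm continuous_const))
    refine Filter.mem_of_superset (ho.mem_nhds ⟨h0', h1', h2'⟩) ?_
    rintro a ⟨ha, hb, hc⟩
    rw [hK]
    exact ⟨ha.le, hb.le, hc.le⟩
  have hloc : IsLocalMaxOn (fun y => u y - φ y) Ω w :=
    (hw.isLocalMax hnhds).on Ω
  have hbell := hsub φ hφc.contDiffOn w hwΩ hloc
  have hge := aux_nonneg d hd _ _ (hf0 w hwΩ) hbell v hxy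
  rw [aux_hess d φ hφc w v ((u y - u x) + δ / 2 * S x) (-(δ / 2)) S hS ?_] at hge
  · linarith
  · intro a
    simp only [hφ, hsl, hpl]
    have e1 : HasDerivAt (fun τ : ℝ => s a + τ) 1 0 := (hasDerivAt_id 0).const_add _
    have e2 := (((e1.const_mul (u y - u x)).const_add (u x)).sub
      ((e1.pow 2).const_mul (δ / 4))).add_const (N * ∑ i, p a i ^ 2)
    refine HasDerivAt.congr_deriv e2 ?_
    have : s a = S a - S x := by rw [hs]
    rw [this]
    norm_num
    ring
end
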